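/- arXiv:1401.6450 — 4 statements merged into one kernel-verified Lean document; each statement's English description precedes it below -/
import Mathlib

section
/- For every subset J′ ⊆ J, one has Σ^x(A_{J′}) ≤ exp( −2β · Σ_{{q,r} ∈ 𝔈J′} ξ^{qr} ). -/
open Filter

noncomputable section

namespace InfFilter

/-- The space-time box `J = [1,k] × [-m,m] ⊆ ℤ²`. -/
def Jset (k m : ℕ) : Finset (ℤ × ℤ) :=
  Finset.Icc (1 : ℤ) (k : ℤ) ×ˢ Finset.Icc (-(m : ℤ)) (m : ℤ)

/-- The boundary `∂J = {0} × [-m,m] ∪ [1,k] × {-m-1, m+1}`. -/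
def bJset (k m : ℕ) : Finset (ℤ × ℤ) :=
  ({0} : Finset ℤ) ×ˢ Finset.Icc (-(m : ℤ)) (m : ℤ) ∪
    Finset.Icc (1 : ℤ) (k : ℤ) ×ˢ ({-(m : ℤ) - 1, (m : ℤ) + 1} : Finset ℤ)

/-- The Hamiltonian
`β [ Σ_{{q,r}⊆J, ‖q-r‖₁=1} ξ^{qr} x^q x^r z^q z^r + Σ_{q∈J, r∈∂J, ‖q-r‖₁=1} ξ^{qr} x^q z^q ]`;
each unordered edge inside `J` is enumerated once via `r = q + (1,0)` or `r = q + (0,1)`. -/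
def ham (β : ℝ) (k m : ℕ) (ξ : ℤ × ℤ → ℤ × ℤ → ℝ) (x z : ℤ × ℤ → ℝ) : ℝ :=
  β * ((∑ q ∈ Jset k m, ∑ r ∈ Jset k m,
        if r = (q.1 + 1, q.2) ∨ r = (q.1, q.2 + 1) then ξ q r * x q * x r * z q * z r else 0) +
      ∑ q ∈ Jset k m, ∑ r ∈ bJset k m,
        if (q.1 - r.1).natAbs + (q.2 - r.2).natAbs = 1 then ξ q r * x q * z q else 0)

/-- Extend a sign configuration on `J` (encoded by booleans) to all of `ℤ²`. -/
def ext (k m : ℕ) (z : {q // q ∈ Jset k m} → Bool) : ℤ × ℤ → ℝ := fun q =>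
  if h : q ∈ Jset k m then (if z ⟨q, h⟩ then 1 else -1) else 0

/-- The sign configuration on `J` determined by booleans, as an element of `{-1,1}^J`. -/
def sgn (k m : ℕ) (z : {q // q ∈ Jset k m} → Bool) : {q // q ∈ Jset k m} → ℝ :=
  fun q => if z q then 1 else -1

/-- The random bond Ising measure `Σ^x(A)` on `{-1,1}^J` with boundary condition `x`
and bond signs `ξ`. -/
def gibbs (β : ℝ) (k m : ℕ) (ξ : ℤ × ℤ → ℤ × ℤ → ℝ) (x : ℤ × ℤ → ℝ)
    (A : Set ({q // q ∈ Jset k m} → ℝ)) : ℝ :=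
  (∑ z : {q // q ∈ Jset k m} → Bool,
      A.indicator (fun _ => Real.exp (ham β k m ξ x (ext k m z))) (sgn k m z)) /
    ∑ z : {q // q ∈ Jset k m} → Bool, Real.exp (ham β k m ξ x (ext k m z))

/-- The boundary edge set `𝔈J' = {{q,r} : q ∈ J', r ∈ (J∖J') ∪ ∂J, ‖q-r‖₁ = 1}`, enumerated
as ordered pairs `(q, r)` with `q ∈ J'` (each unordered boundary edge occurs exactly once). -/
def bEdges (k m : ℕ) (J' : Finset (ℤ × ℤ)) : Finset ((ℤ × ℤ) × (ℤ × ℤ)) :=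
  (J' ×ˢ ((Jset k m \ J') ∪ bJset k m)).filter
    fun e => (e.1.1 - e.2.1).natAbs + (e.1.2 - e.2.2).natAbs = 1

/-- The event `A_{J'}`: configurations `z ∈ {-1,1}^J` with `z^q = -x^q` for every `q ∈ J'`
in some boundary edge of `J'` and `z^r = x^r` for every `r ∈ J∖J'` in some boundary edge. -/
def contourEvent (k m : ℕ) (x : ℤ × ℤ → ℝ) (J' : Finset (ℤ × ℤ)) :
    Set ({q // q ∈ Jset k m} → ℝ) :=
  {z | (∀ q : {q // q ∈ Jset k m}, q.1 ∈ J' →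
          (∃ r, (q.1, r) ∈ bEdges k m J') → z q = -x q.1) ∧
       ∀ r : {q // q ∈ Jset k m}, r.1 ∈ Jset k m \ J' →
          (∃ q, (q, r.1) ∈ bEdges k m J') → z r = x r.1}

lemma disjJb (k m : ℕ) : Disjoint (Jset k m) (bJset k m) := by
  rw [Finset.disjoint_left]
  rintro ⟨a, b⟩ h1 h2
  simp only [Jset, bJset, Finset.mem_union, Finset.mem_product, Finset.mem_Icc,
    Finset.mem_singleton, Finset.mem_insert] at h1 h2
  omega

lemma bEdges_sum (k m : ℕ) (ξ : ℤ × ℤ → ℤ × ℤ → ℝ) (J' : Finset (ℤ × ℤ))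
    (hJ' : J' ⊆ Jset k m) :
    ∑ e ∈ bEdges k m J', ξ e.1 e.2 =
      (∑ q ∈ Jset k m, ∑ r ∈ Jset k m,
        if q ∈ J' ∧ r ∉ J' ∧ (q.1 - r.1).natAbs + (q.2 - r.2).natAbs = 1 then ξ q r else 0) +
      ∑ q ∈ Jset k m, ∑ r ∈ bJset k m,
        if q ∈ J' ∧ (q.1 - r.1).natAbs + (q.2 - r.2).natAbs = 1 then ξ q r else 0 := by
  have hd : Disjoint (Jset k m \ J') (bJset k m) :=
    (disjJb k m).mono_left Finset.sdiff_subset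
  rw [bEdges, Finset.sum_filter, Finset.sum_product, ← Finset.sum_add_distrib]
  rw [← Finset.sum_subset hJ']
  · refine Finset.sum_congr rfl fun q hq => ?_
    rw [Finset.sum_union hd]
    congr 1
    · rw [← Finset.sum_subset (Finset.sdiff_subset (s := Jset k m) (t := J'))]
      · refine Finset.sum_congr rfl fun r hr => ?_
        have := (Finset.mem_sdiff.1 hr).2
        simp [hq, this]
      · intro r hr hr'
        have : r ∈ J' := by
          by_contra h
          exact hr' (Finset.mem_sdiff.2 ⟨hr, h⟩)
        simp [this]
    · simp [hq]
  · intro q _ hq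
    simp [hq]

lemma ham_diff (β : ℝ) (k m : ℕ) (ξ : ℤ × ℤ → ℤ × ℤ → ℝ) (hξsym : ∀ q r, ξ q r = ξ r q)
    (x w w' : ℤ × ℤ → ℝ) (hx : ∀ q, q ∈ Jset k m → x q * x q = 1)
    (J' : Finset (ℤ × ℤ)) (hJ' : J' ⊆ Jset k m)
    (h1 : ∀ q, q ∈ J' → w' q = - w q)
    (h2 : ∀ q, q ∈ Jset k m → q ∉ J' → w' q = w q)
    (h3 : ∀ q r, (q, r) ∈ bEdges k m J' → w q = - x q)
    (h4 : ∀ q r, (q, r) ∈ bEdges k m J' → r ∈ Jset k m → w r = x r) :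
    ham β k m ξ x w = -2 * β * ∑ e ∈ bEdges k m J', ξ e.1 e.2 + ham β k m ξ x w' := by
  have hA : (∑ q ∈ Jset k m, ∑ r ∈ Jset k m,
        if q ∈ J' ∧ r ∉ J' ∧ (q.1 - r.1).natAbs + (q.2 - r.2).natAbs = 1 then ξ q r else 0)
      = ∑ q ∈ Jset k m, ∑ r ∈ Jset k m,
        if (r = (q.1 + 1, q.2) ∨ r = (q.1, q.2 + 1)) ∧ ¬ (q ∈ J' ↔ r ∈ J') then ξ q r else 0 := by
    have e1 : ∀ q r : ℤ × ℤ,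
        (if q ∈ J' ∧ r ∉ J' ∧ (q.1 - r.1).natAbs + (q.2 - r.2).natAbs = 1 then ξ q r else 0)
        = (if (r = (q.1 + 1, q.2) ∨ r = (q.1, q.2 + 1)) ∧ q ∈ J' ∧ r ∉ J' then ξ q r else 0)
        + (if (q = (r.1 + 1, r.2) ∨ q = (r.1, r.2 + 1)) ∧ q ∈ J' ∧ r ∉ J' then ξ r q else 0) := by
      rintro ⟨a, b⟩ ⟨c, d⟩
      rw [hξsym (c, d) (a, b)]
      by_cases hq : (a, b) ∈ J' <;> by_cases hr : (c, d) ∈ J' <;> simp only [hq, hr] <;>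
        simp only [Prod.mk.injEq, not_true_eq_false, not_false_eq_true, false_and, true_and,
          and_true, and_false, if_false, add_zero]
      split_ifs <;> first | omega | simp
    have e2 : ∀ q r : ℤ × ℤ,
        (if (r = (q.1 + 1, q.2) ∨ r = (q.1, q.2 + 1)) ∧ ¬ (q ∈ J' ↔ r ∈ J') then ξ q r else 0)
        = (if (r = (q.1 + 1, q.2) ∨ r = (q.1, q.2 + 1)) ∧ q ∈ J' ∧ r ∉ J' then ξ q r else 0)
        + (if (r = (q.1 + 1, q.2) ∨ r = (q.1, q.2 + 1)) ∧ r ∈ J' ∧ q ∉ J' then ξ q r else 0) := by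
      intro q r
      by_cases hq : q ∈ J' <;> by_cases hr : r ∈ J' <;> simp [hq, hr]
    simp_rw [e1, e2, Finset.sum_add_distrib]
    congr 1
    rw [Finset.sum_comm]
  rw [bEdges_sum k m ξ J' hJ', hA]
  unfold ham
  rw [show ∀ a b c d : ℝ, -2 * β * (a + b) + β * (c + d) = β * ((-2 * a + c) + (-2 * b + d)) by
    intros; ring]
  refine congrArg (fun t => β * t) (congrArg₂ (· + ·) ?_ ?_) <;>
    simp_rw [Finset.mul_sum, ← Finset.sum_add_distrib]
  · refine Finset.sum_congr rfl fun q hq => Finset.sum_congr rfl fun r hr => ?_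
    by_cases hD : r = (q.1 + 1, q.2) ∨ r = (q.1, q.2 + 1)
    · have hadj : (q.1 - r.1).natAbs + (q.2 - r.2).natAbs = 1 := by
        rcases hD with h | h <;> simp [h]
      have hadj' : (r.1 - q.1).natAbs + (r.2 - q.2).natAbs = 1 := by omega
      have xq := hx q hq
      have xr := hx r hr
      by_cases hqJ : q ∈ J' <;> by_cases hrJ : r ∈ J'
      · simp only [hD, hqJ, hrJ, h1 q hqJ, h1 r hrJ]; simp
      · have hm : (q, r) ∈ bEdges k m J' := by
          simp [bEdges, hqJ, hrJ, hr, hadj]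
        simp only [hD, hqJ, hrJ, h1 q hqJ, h2 r hr hrJ, h3 q r hm, h4 q r hm hr]
        simp
        linear_combination (-2 * ξ q r * x r * x r) * xq + (-2 * ξ q r) * xr
      · have hm : (r, q) ∈ bEdges k m J' := by
          simp [bEdges, hqJ, hrJ, hq, hadj']
        simp only [hD, hqJ, hrJ, h1 r hrJ, h2 q hq hqJ, h3 r q hm, h4 r q hm hq]
        simp
        linear_combination (-2 * ξ q r * x r * x r) * xq + (-2 * ξ q r) * xr
      · simp only [hD, hqJ, hrJ, h2 q hq hqJ, h2 r hr hrJ]; simp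
    · simp [hD]
  · refine Finset.sum_congr rfl fun q hq => Finset.sum_congr rfl fun r hr => ?_
    by_cases hadj : (q.1 - r.1).natAbs + (q.2 - r.2).natAbs = 1
    · have xq := hx q hq
      by_cases hqJ : q ∈ J'
      · have hm : (q, r) ∈ bEdges k m J' := by
          simp [bEdges, hqJ, hr, hadj]
        simp only [hadj, hqJ, h1 q hqJ, h3 q r hm]
        simp
        linear_combination (-2 * ξ q r) * xq
      · simp only [hadj, hqJ, h2 q hq hqJ]; simp
    · simp [hadj]

/-- Flip the spins in `J'`. -/
def flipJ (k m : ℕ) (J' : Finset (ℤ × ℤ)) (z : {q // q ∈ Jset k m} → Bool) :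
    {q // q ∈ Jset k m} → Bool := fun q => if q.1 ∈ J' then !(z q) else z q

lemma flipJ_inv (k m : ℕ) (J' : Finset (ℤ × ℤ)) : Function.Involutive (flipJ k m J') := by
  intro z
  funext q
  by_cases h : q.1 ∈ J' <;> simp [flipJ, h]

/-- **Lemma 3.7 (Peierls estimate).**  For every `J' ⊆ J`,
`Σ^x(A_{J'}) ≤ exp(−2β Σ_{{q,r} ∈ 𝔈J'} ξ^{qr})`. -/
theorem statement5 (k m : ℕ) (hk : 1 ≤ k) (hm : 1 ≤ m) (β : ℝ) (hβ : 0 ≤ β)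
    (ξ : ℤ × ℤ → ℤ × ℤ → ℝ) (hξsym : ∀ q r, ξ q r = ξ r q)
    (hξval : ∀ q r, q ∈ Jset k m → r ∈ Jset k m ∪ bJset k m →
      (q.1 - r.1).natAbs + (q.2 - r.2).natAbs = 1 → ξ q r = 1 ∨ ξ q r = -1)
    (x : ℤ × ℤ → ℝ) (hx : ∀ q, q ∈ Jset k m ∪ bJset k m → x q = 1 ∨ x q = -1)
    (J' : Finset (ℤ × ℤ)) (hJ' : J' ⊆ Jset k m) :
    gibbs β k m ξ x (contourEvent k m x J') ≤
      Real.exp (-2 * β * ∑ e ∈ bEdges k m J', ξ e.1 e.2) := by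
  have hxx : ∀ q, q ∈ Jset k m → x q * x q = 1 := by
    intro q hq
    rcases hx q (Finset.mem_union_left _ hq) with h | h <;> simp [h]
  unfold gibbs
  have hpos : 0 < ∑ z : {q // q ∈ Jset k m} → Bool, Real.exp (ham β k m ξ x (ext k m z)) :=
    Finset.sum_pos (fun _ _ => Real.exp_pos _) Finset.univ_nonempty
  rw [div_le_iff₀ hpos]
  rw [← Equiv.sum_comp (flipJ_inv k m J').toPerm
    (fun z => Real.exp (ham β k m ξ x (ext k m z))), Finset.mul_sum]
  refine Finset.sum_le_sum fun z _ => ?_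
  by_cases hz : sgn k m z ∈ contourEvent k m x J'
  · rw [Set.indicator_of_mem hz, ← Real.exp_add]
    refine Real.exp_le_exp.2 (le_of_eq ?_)
    have hs : ∀ q (hq : q ∈ Jset k m), ext k m z q = sgn k m z ⟨q, hq⟩ := by
      intro q hq
      simp [ext, sgn, hq]
    refine ham_diff β k m ξ hξsym x _ _ hxx J' hJ' ?_ ?_ ?_ ?_
    · intro q hq
      have hqJ := hJ' hq
      by_cases hb : z ⟨q, hqJ⟩ <;> simp [ext, flipJ, hq, hqJ, hb]
    · intro q hqJ hq
      simp [ext, flipJ, hq, hqJ]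
    · intro q r hqr
      have hq : q ∈ J' := (Finset.mem_product.1 (Finset.mem_filter.1 hqr).1).1
      rw [hs q (hJ' hq)]
      exact hz.1 ⟨q, hJ' hq⟩ hq ⟨r, hqr⟩
    · intro q r hqr hr
      have h : r ∈ Jset k m \ J' := by
        rcases Finset.mem_union.1 (Finset.mem_product.1 (Finset.mem_filter.1 hqr).1).2 with h | h
        · exact h
        · exact absurd h (Finset.disjoint_left.1 (disjJb k m) hr)
      rw [hs r hr]
      exact hz.2 ⟨r, hr⟩ h ⟨q, hqr⟩
  · rw [Set.indicator_of_notMem hz]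
    positivity

end InfFilter
end
end

section
/- Let (X_k, Y_k)_{k∈ℤ} be a stationary stochastic process where X_k = (X_k^v)_{v∈ℤ} takes values in {−1,1}^ℤ and Y_k takes values in a standard Borel space. Suppose that for every m ≥ 1 and every function f : {−1,1}^{2m+1} → ℝ, E|E[f(X_k^{−m}, …, X_k^m) | X_0, Y_1, …, Y_k] − E[f(X_k^{−m}, …, X_k^m) | Y_1, …, Y_k]| → 0 as k → ∞. Then for every measurable A ⊆ {−1,1}^ℤ, E|P[X_k ∈ A | X_0, Y_1, …, Y_k] − P[X_k ∈ A | Y_1, …, Y_k]| → 0 as k → ∞ (i.e., the filter is stable). -/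
open MeasureTheory ProbabilityTheory Filter

noncomputable section

namespace InfFilter

variable {Ω : Type*} [MeasurableSpace Ω]

/-- The σ-algebra `σ(Y_1, …, Y_k)`. -/
def obsσ {F : Type*} [MeasurableSpace F] (Y : ℤ → Ω → F) (k : ℕ) : MeasurableSpace Ω :=
  ⨆ ℓ ∈ Finset.Icc (1 : ℤ) (k : ℤ), MeasurableSpace.comap (Y ℓ) inferInstance

lemma int_diff_le (P : Measure Ω) [IsProbabilityMeasure P] {f g : Ω → ℝ}
    (hf : Integrable f P) (hg : Integrable g P) (m₁ m₂ : MeasurableSpace Ω) :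
    ∫ ω, |(P[f|m₁]) ω - (P[f|m₂]) ω| ∂P ≤
      ∫ ω, |(P[g|m₁]) ω - (P[g|m₂]) ω| ∂P + 2 * ∫ ω, |f ω - g ω| ∂P := by
  have h₁ := integral_abs_condExp_le (μ := P) (m := m₁) (f - g)
  have h₂ := integral_abs_condExp_le (μ := P) (m := m₂) (f - g)
  have i₁ : Integrable (fun ω => |(P[f - g|m₁]) ω|) P := integrable_condExp.abs
  have i₂ : Integrable (fun ω => |(P[f - g|m₂]) ω|) P := integrable_condExp.abs
  have i₃ : Integrable (fun ω => |(P[g|m₁]) ω - (P[g|m₂]) ω|) P :=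
    (integrable_condExp.sub integrable_condExp).abs
  have i₄ : Integrable (fun ω => |(P[f|m₁]) ω - (P[f|m₂]) ω|) P :=
    (integrable_condExp.sub integrable_condExp).abs
  have key : ∫ ω, |(P[f|m₁]) ω - (P[f|m₂]) ω| ∂P ≤
      ∫ ω, (|(P[g|m₁]) ω - (P[g|m₂]) ω| + (|(P[f - g|m₁]) ω| + |(P[f - g|m₂]) ω|)) ∂P := by
    refine integral_mono_ae i₄ (i₃.add (i₁.add i₂)) ?_
    filter_upwards [condExp_sub hf hg m₁, condExp_sub hf hg m₂] with ω e₁ e₂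
    simp only [e₁, e₂, Pi.sub_apply]
    have := abs_add_three ((P[g|m₁]) ω - (P[g|m₂]) ω) ((P[f|m₁]) ω - (P[g|m₁]) ω)
      (-((P[f|m₂]) ω - (P[g|m₂]) ω))
    rw [abs_neg] at this
    refine le_trans (le_of_eq ?_) (this.trans (le_of_eq (by ring)))
    congr 1
    ring
  have i₅ : Integrable (fun ω => |(P[f - g|m₁]) ω| + |(P[f - g|m₂]) ω|) P := i₁.add i₂
  rw [integral_add i₃ i₅, integral_add i₁ i₂] at key
  simp only [Pi.sub_apply] at h₁ h₂
  linarith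

/-- **Lemma 3.8.**  Let `(X_k, Y_k)_{k∈ℤ}` be a stationary process with
`X_k ∈ {-1,1}^ℤ` and `Y_k` in a standard Borel space.  If the finite-dimensional marginals
of the filter are stable, then the filter is stable. -/
theorem statement6 {F : Type*} [MeasurableSpace F] [StandardBorelSpace F]
    (P : Measure Ω) [IsProbabilityMeasure P]
    (X : ℤ → Ω → ℤ → ℝ) (Y : ℤ → Ω → F)
    (hXm : ∀ k, Measurable (X k)) (hYm : ∀ k, Measurable (Y k))
    (hXval : ∀ k ω v, X k ω v = 1 ∨ X k ω v = -1)
    (hstat : P.map (fun ω => fun k : ℤ => (X (k + 1) ω, Y (k + 1) ω)) =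
      P.map (fun ω => fun k : ℤ => (X k ω, Y k ω)))
    (hfd : ∀ m : ℕ, 1 ≤ m → ∀ f : (Fin (2 * m + 1) → ℝ) → ℝ,
      Tendsto (fun k : ℕ =>
          ∫ ω, |(P[(fun ω' => f fun i => X (k : ℤ) ω' ((i : ℤ) - (m : ℤ)))|
                    MeasurableSpace.comap (X 0) inferInstance ⊔ obsσ Y k]) ω
              - (P[(fun ω' => f fun i => X (k : ℤ) ω' ((i : ℤ) - (m : ℤ)))|obsσ Y k]) ω| ∂P)
        atTop (nhds 0)) :
    ∀ A : Set (ℤ → ℝ), MeasurableSet A →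
      Tendsto (fun k : ℕ =>
          ∫ ω, |(P[(fun ω' => A.indicator (fun _ => (1 : ℝ)) (X (k : ℤ) ω'))|
                    MeasurableSpace.comap (X 0) inferInstance ⊔ obsσ Y k]) ω
              - (P[(fun ω' => A.indicator (fun _ => (1 : ℝ)) (X (k : ℤ) ω'))|obsσ Y k]) ω| ∂P)
        atTop (nhds 0) := by
  intro A hA
  have hstep : ∀ k : ℤ, P.map (X (k + 1)) = P.map (X k) := by
    intro k
    have hm : ∀ j : ℤ, Measurable (fun ω => fun k : ℤ => (X (k + j) ω, Y (k + j) ω)) := fun j =>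
      measurable_pi_lambda _ fun k => (hXm _).prodMk (hYm _)
    have hm0 : Measurable (fun ω => fun k : ℤ => (X k ω, Y k ω)) :=
      measurable_pi_lambda _ fun k => (hXm _).prodMk (hYm _)
    have hp : Measurable (fun z : ℤ → (ℤ → ℝ) × F => (z k).1) :=
      measurable_fst.comp (measurable_pi_apply k)
    have := congrArg (fun μ => Measure.map (fun z : ℤ → (ℤ → ℝ) × F => (z k).1) μ) hstat
    simp only [Measure.map_map hp (hm 1), Measure.map_map hp hm0] at this
    exact this
  have hlaw : ∀ k : ℕ, P.map (X (k : ℤ)) = P.map (X 0) := by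
    intro k
    induction k with
    | zero => rfl
    | succ k ih => rw [← ih, ← hstep k]; norm_num
  have hμ : IsProbabilityMeasure (P.map (X 0)) :=
    Measure.isProbabilityMeasure_map (hXm 0).aemeasurable
  rw [Metric.tendsto_atTop]
  intro ε hε
  obtain ⟨B, hB, hAB⟩ := (Measure.MeasureDense.of_generateFrom_isSetAlgebra_finite
    (P.map (X 0)) (isSetAlgebra_measurableCylinders (α := fun _ : ℤ => ℝ))
    generateFrom_measurableCylinders.symm).approx A hA (measure_ne_top _ _) (ε / 4) (by positivity)
  have hBm : MeasurableSet B := MeasurableSet.of_mem_measurableCylinders hB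
  obtain ⟨s, S, hS, rfl⟩ := (mem_measurableCylinders B).1 hB
  obtain ⟨m, hm1, hms⟩ : ∃ m : ℕ, 1 ≤ m ∧ ∀ i ∈ s, -(m : ℤ) ≤ i ∧ i ≤ m := by
    refine ⟨1 + ∑ i ∈ s, i.natAbs, by omega, fun i hi => ?_⟩
    have := Finset.single_le_sum (f := fun i : ℤ => i.natAbs) (fun _ _ => Nat.zero_le _) hi
    omega
  let f : (Fin (2 * m + 1) → ℝ) → ℝ := fun g =>
    S.indicator (fun _ => (1 : ℝ)) (fun i : s => g ⟨(i.1 + m).toNat, by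
      have := hms i.1 i.2
      omega⟩)
  have hf : ∀ x : ℤ → ℝ, (f fun i => x ((i : ℤ) - (m : ℤ))) =
      (cylinder s S).indicator (fun _ => (1 : ℝ)) x := by
    intro x
    have : (fun i : s => x (((i.1 + m).toNat : ℤ) - (m : ℤ))) = s.restrict x := by
      funext i
      have := hms i.1 i.2
      simp only [Finset.restrict]
      congr 1
      omega
    simp only [f, this]
    rfl
  obtain ⟨N, hN⟩ := (Metric.tendsto_atTop.1 (hfd m hm1 f)) (ε / 2) (by positivity)
  refine ⟨N, fun k hk => ?_⟩
  have h1 := hN k hk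
  simp only [hf] at h1
  have hint : ∀ C : Set (ℤ → ℝ), MeasurableSet C →
      Integrable (fun ω' => C.indicator (fun _ => (1 : ℝ)) (X (k : ℤ) ω')) P := fun C hC =>
    (integrable_const (1 : ℝ)).indicator (hXm k hC)
  have h2 := int_diff_le P (hint A hA) (hint _ hBm)
    (MeasurableSpace.comap (X 0) inferInstance ⊔ obsσ Y k) (obsσ Y k)
  have h3 : ∫ ω, |A.indicator (fun _ => (1 : ℝ)) (X (k : ℤ) ω)
      - (cylinder s S).indicator (fun _ => (1 : ℝ)) (X (k : ℤ) ω)| ∂P < ε / 4 := by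
    have hD : MeasurableSet (symmDiff A (cylinder s S)) := hA.symmDiff hBm
    have e : (fun ω => |A.indicator (fun _ => (1 : ℝ)) (X (k : ℤ) ω)
      - (cylinder s S).indicator (fun _ => (1 : ℝ)) (X (k : ℤ) ω)|) =
      (X k ⁻¹' symmDiff A (cylinder s S)).indicator 1 := by
      funext ω
      by_cases a : X k ω ∈ A <;> by_cases b : X k ω ∈ cylinder s S <;>
        simp only [Set.indicator, Set.mem_preimage, Set.mem_symmDiff, a, b] <;> norm_num
    rw [e, integral_indicator_one (hXm k hD), measureReal_def,
      ← Measure.map_apply (hXm k) hD, hlaw k]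
    exact (ENNReal.toReal_lt_of_lt_ofReal hAB)
  rw [Real.dist_eq, sub_zero] at h1 ⊢
  rw [abs_of_nonneg (integral_nonneg fun _ => abs_nonneg _)] at h1 ⊢
  linarith

end InfFilter
end
end

section
/- For every bounded continuous function f : ℝ^{m+1} → ℝ there exists a sequence of bounded continuous functions g_n : ℝ^{m+1} → ℝ such that E| E[ g_n( n ∫_0^{1/n} X_s ds + G_n ) | σ(X) ] − f(X_0) | → 0 as n → ∞. -/
open MeasureTheory ProbabilityTheory Filter

noncomputable section

namespace InfFilter

lemma condExp_indep_aux {Ω β E : Type*} {mΩ : MeasurableSpace Ω} {mβ : MeasurableSpace β}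
    [MeasurableSpace E] [StandardBorelSpace E] [Nonempty E]
    (P : Measure Ω) [IsProbabilityMeasure P] (Z : Ω → β) (hZ : Measurable Z)
    (G : Ω → E) (hG : Measurable G) (hind : IndepFun Z G P)
    (F : β × E → ℝ) (hF : StronglyMeasurable F)
    (hFi : Integrable (fun a => F (Z a, G a)) P) :
    P[fun a => F (Z a, G a) | mβ.comap Z] =ᵐ[P] fun a => ∫ y, F (Z a, y) ∂(P.map G) := by
  have h1 := condExp_prod_ae_eq_integral_condDistrib hZ hG.aemeasurable hF hFi
  have hp : IsProbabilityMeasure (P.map G) := Measure.isProbabilityMeasure_map hG.aemeasurable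
  have h2 : condDistrib G Z P =ᵐ[P.map Z] Kernel.const β (P.map G) := by
    apply condDistrib_ae_eq_of_measure_eq_compProd
    · exact hG.aemeasurable
    · rw [(indepFun_iff_map_prod_eq_prod_map_map hZ.aemeasurable hG.aemeasurable).1 hind,
        Measure.compProd_const]
  have h3 := ae_of_ae_map hZ.aemeasurable h2
  filter_upwards [h1, h3] with a h1 h3
  rw [h1, h3, Kernel.const_apply]

lemma integral_sin_gauss (v : NNReal) (y c : ℝ) :
    ∫ z, Real.sin (c * (y + z)) ∂(gaussianReal 0 v)
      = Real.exp (-(v * c ^ 2 / 2)) * Real.sin (c * y) := by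
  have h := charFun_gaussianReal (μ := 0) (v := v) c
  rw [charFun_apply_real] at h
  have hi : Integrable (fun z : ℝ => Complex.exp (c * y * Complex.I) *
      Complex.exp (c * z * Complex.I)) (gaussianReal 0 v) := by
    refine Integrable.of_bound (C := 1) (by fun_prop) (ae_of_all _ fun z => ?_)
    have h1 := Complex.norm_exp_ofReal_mul_I (c * y)
    have h2 := Complex.norm_exp_ofReal_mul_I (c * z)
    push_cast at h1 h2
    rw [norm_mul, h1, h2, one_mul]
  have h2 : ∀ z : ℝ, Real.sin (c * (y + z)) =
      RCLike.im (Complex.exp (c * y * Complex.I) * Complex.exp (c * z * Complex.I)) := by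
    intro z
    rw [← Complex.exp_add]
    have : (c * y * Complex.I + c * z * Complex.I : ℂ) = ((c * (y + z) : ℝ) : ℂ) * Complex.I := by
      push_cast; ring
    rw [this]
    exact (Complex.exp_ofReal_mul_I_im _).symm
  simp_rw [h2]
  rw [integral_im hi, integral_const_mul, h]
  have : (c * (0:ℝ) * Complex.I - v * c ^ 2 / 2 : ℂ) = ((-(v * c ^ 2 / 2) : ℝ) : ℂ) := by
    push_cast; ring
  rw [this, ← Complex.ofReal_exp, mul_comm]
  have h3 : (c * y * Complex.I : ℂ) = ((c * y : ℝ) : ℂ) * Complex.I := by push_cast; ring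
  rw [h3]
  change (_ : ℂ).im = _
  rw [Complex.im_ofReal_mul, Complex.exp_ofReal_mul_I_im]

/-- the signs -/
def sg (b : Bool) : ℝ := if b then 1 else -1

/-- interpolation with amplitude `a` -/
def kk (m : ℕ) (f : (Fin (m + 1) → ℝ) → ℝ) (a : ℝ) (x : Fin (m + 1) → ℝ) : ℝ :=
  ∑ e : Fin (m + 1) → Bool, f (fun i => sg (e i)) *
    ∏ i, ((1 + sg (e i) * (a * Real.sin (Real.pi / 2 * x i))) / 2)

lemma kk_cont (m : ℕ) (f) (a : ℝ) : Continuous (kk m f a) := by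
  unfold kk; fun_prop

lemma sg_abs (b : Bool) : |sg b| = 1 := by cases b <;> simp [sg]

lemma kk_bdd (m : ℕ) (f) (a : ℝ) : ∃ C, ∀ x, |kk m f a x| ≤ C := by
  refine ⟨∑ e : Fin (m + 1) → Bool, |f (fun i => sg (e i))| * ∏ i : Fin (m + 1), ((1 + |a|) / 2),
    fun x => ?_⟩
  unfold kk
  refine (Finset.abs_sum_le_sum_abs _ _).trans (Finset.sum_le_sum fun e _ => ?_)
  rw [abs_mul, Finset.abs_prod]
  gcongr with i
  rw [abs_div, abs_two]
  gcongr
  refine (abs_add_le _ _).trans ?_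
  rw [abs_one, abs_mul, sg_abs, one_mul, abs_mul]
  gcongr
  exact mul_le_of_le_one_right (abs_nonneg _) (Real.abs_sin_le_one _)

lemma kk_cube (m : ℕ) (f) (x : Fin (m + 1) → ℝ) (hx : ∀ i, x i = 1 ∨ x i = -1) :
    kk m f 1 x = f x := by
  classical
  have hb : ∀ i, ∃ b, x i = sg b := fun i => by
    rcases hx i with h | h
    · exact ⟨true, by simp [h, sg]⟩
    · exact ⟨false, by simp [h, sg]⟩
  choose b hb using hb
  have hs : ∀ i, Real.sin (Real.pi / 2 * x i) = sg (b i) := fun i => by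
    rw [hb]; cases b i <;> simp [sg]
  unfold kk
  rw [Finset.sum_eq_single b]
  · have : ∀ i, (1 + sg (b i) * (1 * Real.sin (Real.pi / 2 * x i))) / 2 = 1 := fun i => by
      rw [hs]; cases b i <;> norm_num [sg]
    simp only [this, Finset.prod_const_one, mul_one]
    congr 1; ext i; exact (hb i).symm
  · intro e _ hne
    obtain ⟨i, hi⟩ := Function.ne_iff.1 hne
    rw [Finset.prod_eq_zero (Finset.mem_univ i), mul_zero]
    rw [hs]; cases h : e i <;> cases h' : b i <;> simp_all [sg]
  · simp

lemma kk_gauss (m : ℕ) (f) (v : NNReal) (y : Fin (m + 1) → ℝ) :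
    ∫ z, kk m f (Real.exp (v * (Real.pi / 2) ^ 2 / 2)) (fun i => y i + z i)
      ∂(Measure.pi fun _ : Fin (m + 1) => gaussianReal 0 v) = kk m f 1 y := by
  unfold kk
  set a := Real.exp (v * (Real.pi / 2) ^ 2 / 2) with ha
  have hint : ∀ (t u : ℝ), Integrable (fun z : ℝ => (1 + t * (a * Real.sin (Real.pi / 2 * (u + z)))) / 2)
      (gaussianReal 0 v) := by
    intro t u
    have : Integrable (fun z : ℝ => Real.sin (Real.pi / 2 * (u + z))) (gaussianReal 0 v) :=
      Integrable.of_bound (C := 1) (by fun_prop) (ae_of_all _ fun z => Real.abs_sin_le_one _)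
    exact ((integrable_const _).add ((this.const_mul a).const_mul t)).div_const 2
  rw [integral_finsetSum]
  · refine Finset.sum_congr rfl fun e _ => ?_
    rw [integral_const_mul]
    congr 1
    rw [integral_fintype_prod_eq_prod (f := fun i z => (1 + sg (e i) * (a * Real.sin (Real.pi / 2 * (y i + z)))) / 2)]
    refine Finset.prod_congr rfl fun i _ => ?_
    have hi : Integrable (fun z : ℝ => Real.sin (Real.pi / 2 * (y i + z))) (gaussianReal 0 v) :=
      Integrable.of_bound (C := 1) (by fun_prop) (ae_of_all _ fun z => Real.abs_sin_le_one _)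
    rw [integral_div, integral_add (integrable_const _) ((hi.const_mul a).const_mul _),
      integral_const_mul, integral_const_mul, integral_sin_gauss, ← mul_assoc a, ha, ← Real.exp_add]
    simp
  · intro e _
    exact (Integrable.fintype_prod (f := fun i z => (1 + sg (e i) * (a * Real.sin (Real.pi / 2 * (y i + z)))) / 2) fun i => hint _ _).const_mul _

lemma joint_meas {Ω E : Type*} {mm : MeasurableSpace Ω} [PseudoMetricSpace E] [MeasurableSpace E] [BorelSpace E]
    (X : ℝ → Ω → E) (hX : ∀ t, Measurable (X t))
    (hXrc : ∀ ω t, ContinuousWithinAt (fun u => X u ω) (Set.Ici t) t) :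
    Measurable fun q : ℝ × Ω => X q.1 q.2 := by
  refine measurable_of_tendsto_metrizable
    (f := fun (k : ℕ) (q : ℝ × Ω) => X ((⌈((k:ℝ)+1) * q.1⌉ : ℝ) / ((k:ℝ)+1)) q.2) (fun k => ?_) ?_
  · have h1 : Measurable fun r : ℤ × Ω => X ((r.1 : ℝ) / ((k:ℝ)+1)) r.2 :=
      measurable_from_prod_countable_right fun z => hX ((z : ℝ) / ((k:ℝ)+1))
    have h2 : Measurable fun q : ℝ × Ω => (⌈((k:ℝ)+1) * q.1⌉, q.2) := by fun_prop
    exact h1.comp h2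
  · rw [tendsto_pi_nhds]
    rintro ⟨t, ω⟩
    refine (hXrc ω t).tendsto.comp (tendsto_nhdsWithin_iff.2 ⟨?_, ?_⟩)
    · have hl : Tendsto (fun k : ℕ => t + 1 / ((k:ℝ)+1)) atTop (nhds t) := by
        simpa using tendsto_one_div_add_atTop_nhds_zero_nat.const_add t
      refine tendsto_of_tendsto_of_tendsto_of_le_of_le tendsto_const_nhds hl ?_ ?_
      · intro k
        have : (0:ℝ) < (k:ℝ) + 1 := by positivity
        simp only
        rw [le_div_iff₀ this, mul_comm]
        exact Int.le_ceil _
      · intro k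
        have : (0:ℝ) < (k:ℝ) + 1 := by positivity
        simp only
        rw [div_le_iff₀ this, add_mul t, one_div, inv_mul_cancel₀ this.ne', mul_comm t]
        exact (Int.ceil_lt_add_one _).le
    · refine Eventually.of_forall fun k => ?_
      have : (0:ℝ) < (k:ℝ) + 1 := by positivity
      rw [Set.mem_Ici, le_div_iff₀ this, mul_comm]
      exact Int.le_ceil _

lemma avg_tendsto (x : ℝ → ℝ) (hm : Measurable x)
    (hc : ContinuousWithinAt x (Set.Ici 0) 0) :
    Tendsto (fun n : ℕ => (n : ℝ) * ∫ t in (0 : ℝ)..(1 / (n : ℝ)), x t) atTop (nhds (x 0)) := by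
  have hd : HasDerivWithinAt (fun u => ∫ t in (0:ℝ)..u, x t) (x 0) (Set.Ici 0) 0 :=
    intervalIntegral.integral_hasDerivWithinAt_right (by simp)
      (t := Set.Ioi 0) hm.stronglyMeasurable.stronglyMeasurableAtFilter (hc.mono Set.Ioi_subset_Ici_self)
  have hd := (hd.mono Set.Ioi_subset_Ici_self)
  rw [hasDerivWithinAt_iff_tendsto_slope' (by simp)] at hd
  have hl : Tendsto (fun n : ℕ => 1 / (n:ℝ)) atTop (nhdsWithin 0 (Set.Ioi 0)) := by
    refine tendsto_nhdsWithin_iff.2 ⟨tendsto_one_div_atTop_nhds_zero_nat, ?_⟩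
    filter_upwards [eventually_ge_atTop 1] with n hn
    have : (0:ℝ) < n := by exact_mod_cast hn
    simp [this]
  refine (hd.comp hl).congr fun n => ?_
  simp [slope_def_field, div_eq_mul_inv, mul_comm]

/-- **Lemma 4.12.**  Let `X` be a jointly measurable `{-1,1}^{m+1}`-valued process with
right-continuous paths and let `G_n` be centered Gaussian vectors with covariance `σ²n·Id`,
independent of `X`.  For every bounded continuous `f` there are bounded continuous `g_n` with
`E|E[g_n(n ∫_0^{1/n} X_s ds + G_n) | σ(X)] − f(X_0)| → 0`. -/
theorem statement12 {Ω : Type*} [MeasurableSpace Ω] (P : Measure Ω) [IsProbabilityMeasure P]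
    (m : ℕ) (s : ℝ) (hs : 0 < s)
    (X : ℝ → Ω → Fin (m + 1) → ℝ)
    (hXmeas : Measurable fun q : ℝ × Ω => X q.1 q.2)
    (hXrc : ∀ ω t, ContinuousWithinAt (fun u => X u ω) (Set.Ici t) t)
    (hXval : ∀ t ω i, X t ω i = 1 ∨ X t ω i = -1)
    (G : ℕ → Ω → Fin (m + 1) → ℝ) (hGmeas : ∀ n, Measurable (G n))
    (hGlaw : ∀ n : ℕ, 1 ≤ n →
      P.map (G n) = Measure.pi fun _ : Fin (m + 1) =>
        gaussianReal 0 ((s ^ 2 * (n : ℝ)).toNNReal))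
    (hGindep : ∀ n : ℕ, 1 ≤ n →
      IndepFun (G n) (fun ω => fun t : ℝ => X t ω) P)
    (f : (Fin (m + 1) → ℝ) → ℝ) (hf : Continuous f) (hfb : ∃ C, ∀ x, |f x| ≤ C) :
    ∃ g : ℕ → (Fin (m + 1) → ℝ) → ℝ,
      (∀ n, Continuous (g n) ∧ ∃ C, ∀ x, |g n x| ≤ C) ∧
      Tendsto (fun n : ℕ =>
          ∫ ω, |(P[(fun ω' => g n fun i =>
                    (n : ℝ) * (∫ t in (0 : ℝ)..(1 / (n : ℝ)), X t ω' i) + G n ω' i)|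
                  MeasurableSpace.comap (fun ω' => fun t : ℝ => X t ω') inferInstance]) ω
              - f (X 0 ω)| ∂P)
        atTop (nhds 0) := by
  rename_i mΩ hP
  obtain ⟨C, hC⟩ := hfb
  obtain ⟨D, hD⟩ := kk_bdd m f 1
  set a : ℕ → ℝ := fun n =>
    Real.exp ((s ^ 2 * (n : ℝ)).toNNReal * (Real.pi / 2) ^ 2 / 2) with ha
  refine ⟨fun n => kk m f (a n), fun n => ⟨kk_cont _ _ _, kk_bdd _ _ _⟩, ?_⟩
  have hXt : ∀ t, Measurable (X t) := fun t =>
    hXmeas.comp (measurable_const.prodMk measurable_id)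
  have hpath : Measurable (fun ω => fun t : ℝ => X t ω) := measurable_pi_lambda _ hXt
  set m0 : MeasurableSpace Ω :=
    MeasurableSpace.comap (fun ω' => fun t : ℝ => X t ω') inferInstance with hm0
  have hle : m0 ≤ mΩ := hpath.comap_le
  set Y : ℕ → Ω → Fin (m + 1) → ℝ := fun n ω i =>
    (n : ℝ) * ∫ t in (0 : ℝ)..(1 / (n : ℝ)), X t ω i with hY
  have hXt0 : ∀ t, Measurable[m0] (X t) := fun t => by
    have h : Measurable[m0] (fun ω => fun t : ℝ => X t ω) := comap_measurable _
    exact (measurable_pi_apply t).comp h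
  have hjm : Measurable[(inferInstance : MeasurableSpace ℝ).prod m0]
      (fun q : ℝ × Ω => X q.1 q.2) := joint_meas (mm := m0) X hXt0 hXrc
  have hYm0 : ∀ n, Measurable[m0] (Y n) := by
    intro n
    refine @measurable_pi_lambda _ _ _ m0 _ _ fun i => ?_
    refine Measurable.const_mul ?_ _
    have hi : Measurable[(inferInstance : MeasurableSpace ℝ).prod m0]
      (fun q : ℝ × Ω => X q.1 q.2 i) := (measurable_pi_apply i).comp hjm
    have h01 : (0:ℝ) ≤ 1 / n := by positivity
    simp_rw [intervalIntegral.integral_of_le h01]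
    have := @StronglyMeasurable.integral_prod_left' ℝ Ω ℝ _ m0 (volume.restrict (Set.Ioc 0 (1/(n:ℝ))))
      _ _ _ _ (hi.stronglyMeasurable)
    exact this.measurable
  have hYm : ∀ n, Measurable[mΩ] (Y n) := fun n => (hYm0 n).mono hle le_rfl
  have hYlim : ∀ ω, Tendsto (fun n => Y n ω) atTop (nhds (X 0 ω)) := by
    intro ω
    rw [tendsto_pi_nhds]
    intro i
    refine avg_tendsto (fun t => X t ω i) ?_ ?_
    · exact (measurable_pi_apply i).comp (hXmeas.comp (measurable_id.prodMk measurable_const))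
    · exact (continuous_apply i).continuousAt.comp_continuousWithinAt (hXrc ω 0)
  have hce : ∀ n : ℕ, 1 ≤ n →
      P[(fun ω' => kk m f (a n) fun i => Y n ω' i + G n ω' i) | m0]
        =ᵐ[P] fun ω => kk m f 1 (Y n ω) := by
    intro n hn
    have hind : @IndepFun Ω Ω (Fin (m+1) → ℝ) _ m0 _ id (G n) P := by
      have h := (hGindep n hn).symm
      rw [IndepFun_iff_Indep] at h ⊢
      rw [MeasurableSpace.comap_id]
      exact h
    obtain ⟨K, hK⟩ := kk_bdd m f (a n)
    have hsm : @StronglyMeasurable (Ω × (Fin (m+1) → ℝ)) ℝ _ (m0.prod inferInstance)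
        (fun q => kk m f (a n) fun i => Y n q.1 i + q.2 i) := by
      refine Measurable.stronglyMeasurable ?_
      refine (kk_cont m f (a n)).measurable.comp ?_
      exact ((hYm0 n).comp measurable_fst).add measurable_snd
    have h := condExp_indep_aux (mβ := m0) P id (measurable_id'' hle) (G n) (hGmeas n) hind
      (fun q => kk m f (a n) fun i => Y n q.1 i + q.2 i) hsm
      (Integrable.of_bound (C := K)
        (((kk_cont m f (a n)).measurable.comp ((hYm n).add (hGmeas n))).aestronglyMeasurable)
        (ae_of_all _ fun ω => hK _))
    rw [MeasurableSpace.comap_id] at h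
    refine h.trans (ae_of_all _ fun ω => ?_)
    simp only [id]
    rw [hGlaw n hn]
    exact kk_gauss m f _ (Y n ω)
  have hlim : Tendsto (fun n : ℕ => ∫ ω, |kk m f 1 (Y n ω) - f (X 0 ω)| ∂P) atTop (nhds 0) := by
    have h0 : (0:ℝ) = ∫ ω : Ω, (0:ℝ) ∂P := by simp
    suffices h : Tendsto (fun n : ℕ => ∫ ω, |kk m f 1 (Y n ω) - f (X 0 ω)| ∂P) atTop
        (nhds (∫ ω : Ω, (0:ℝ) ∂P)) by rwa [← h0] at h
    refine tendsto_integral_of_dominated_convergence (fun _ => D + C) (fun n => ?_)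
      (integrable_const _) (fun n => ae_of_all _ fun ω => ?_) (ae_of_all _ fun ω => ?_)
    · have h1 : Measurable[mΩ] (fun ω => kk m f 1 (Y n ω)) :=
        (kk_cont m f 1).measurable.comp (hYm n)
      have h2 : Measurable[mΩ] (fun ω => f (X 0 ω)) := hf.measurable.comp (hXt 0)
      have h3 : Measurable[mΩ] (fun ω => |kk m f 1 (Y n ω) - f (X 0 ω)|) :=
        continuous_abs.measurable.comp (h1.sub h2)
      exact h3.aestronglyMeasurable
    · rw [Real.norm_eq_abs, abs_abs]
      exact (abs_sub _ _).trans (add_le_add (hD _) (hC _))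
    · have h1 := ((kk_cont m f 1).tendsto _).comp (hYlim ω)
      rw [kk_cube m f _ (hXval 0 ω)] at h1
      have h2 := (h1.sub_const (f (X 0 ω))).abs
      simpa using h2
  refine hlim.congr' ?_
  filter_upwards [eventually_ge_atTop 1] with n hn
  refine integral_congr_ae ?_
  filter_upwards [hce n hn] with ω hω
  rw [hω]

end InfFilter
end
end

section
/- For every y ∈ F^{ℤ^d}, the family γ^y = (γ_V^y), indexed by finite V ⊂ ℤ^d, is again a specification: it satisfies properties (1), (2), (3); in particular the consistency identity γ_V^y γ_W^y = γ_V^y holds for all finite W ⊂ V ⊂ ℤ^d. -/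
open MeasureTheory Filter

noncomputable section

namespace RandomField

/-- Sites of the lattice `ℤ^d`. -/
abbrev Site (d : ℕ) := Fin d → ℤ

variable {E : Type*} [MeasurableSpace E] {d : ℕ}

/-- Configurations `E^{ℤ^d}`. -/
abbrev Conf (E : Type*) (d : ℕ) := Site d → E

/-- The cylinder σ-algebra `σ(X_S)` on `E^{ℤ^d}` generated by the coordinates in `S`. -/
def cylσ (E : Type*) [MeasurableSpace E] {d : ℕ} (S : Set (Site d)) :
    MeasurableSpace (Conf E d) :=
  ⨆ v ∈ S, MeasurableSpace.comap (fun x : Conf E d => x v) inferInstance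

/-- Nearest neighbors: `‖v - w‖ = 1`. -/
def Adj (v w : Site d) : Prop := (∑ i, (v i - w i).natAbs) = 1

/-- The exterior boundary `∂V` of a finite set of sites `V`. -/
def bdry (V : Finset (Site d)) : Set (Site d) := {w | w ∉ V ∧ ∃ v ∈ V, Adj v w}

/-- A specification: a family of probability kernels `γ_V` indexed by finite `V ⊂ ℤ^d` with
(1) `γ_V(·, A)` is `σ(X_{∂V})`-measurable for `A ∈ σ(X_V)`;
(2) `γ_V(x, A) = 1_A(x)` for `A ∈ σ(X_{V^c})`;
(3) `γ_V γ_W = γ_V` for `W ⊆ V`. -/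
structure IsSpecification (γ : Finset (Site d) → Conf E d → Measure (Conf E d)) : Prop where
  prob : ∀ V x, IsProbabilityMeasure (γ V x)
  kernel : ∀ (V) (A : Set (Conf E d)), MeasurableSet A → Measurable fun x => γ V x A
  bdryMeas : ∀ (V : Finset (Site d)) (A : Set (Conf E d)),
    MeasurableSet[cylσ E (↑V : Set (Site d))] A →
    Measurable[cylσ E (bdry V)] fun x => γ V x A
  proper : ∀ (V : Finset (Site d)) (A : Set (Conf E d)),
    MeasurableSet[cylσ E ((↑V : Set (Site d))ᶜ)] A →
    ∀ x, γ V x A = A.indicator (fun _ => (1 : ENNReal)) x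
  consistent : ∀ V W : Finset (Site d), W ⊆ V → ∀ (A : Set (Conf E d)), MeasurableSet A →
    ∀ x, ∫⁻ z, γ W z A ∂(γ V x) = γ V x A

/-- The conditional specification
`γ_V^y(x, A) = ∫ 1_A(z) ∏_{v∈V} g_v(z_v, y_v) γ_V(x, dz) / ∫ ∏_{v∈V} g_v(z_v, y_v) γ_V(x, dz)`,
realized as the normalization of `γ_V(x,·)` reweighted by the observation density. -/
def condKer {F : Type*} (γ : Finset (Site d) → Conf E d → Measure (Conf E d))
    (g : Site d → E → F → ℝ) (y : Site d → F) (V : Finset (Site d)) (x : Conf E d) :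
    Measure (Conf E d) :=
  let ρ := (γ V x).withDensity fun z => ENNReal.ofReal (∏ v ∈ V, g v (z v) (y v))
  (ρ Set.univ)⁻¹ • ρ

theorem cyl_le (S : Set (Site d)) :
    cylσ E S ≤ (inferInstance : MeasurableSpace (Conf E d)) := by
  unfold cylσ
  refine iSup₂_le fun v _ => ?_
  exact (measurable_pi_apply v).comap_le

theorem cyl_mono {S T : Set (Site d)} (h : S ⊆ T) : cylσ E S ≤ cylσ E T := by
  unfold cylσ
  exact biSup_mono h

theorem coord_meas {S : Set (Site d)} {v : Site d} (hv : v ∈ S) :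
    Measurable[cylσ E S] (fun x : Conf E d => x v) := by
  rw [measurable_iff_comap_le]
  unfold cylσ
  exact le_iSup₂ (f := fun (v : Site d) (_ : v ∈ S) =>
    MeasurableSpace.comap (fun x : Conf E d => x v) inferInstance) v hv

theorem cyl_gen (S : Set (Site d)) :
    (inferInstance : MeasurableSpace (Conf E d)) = MeasurableSpace.generateFrom
      (Set.image2 (· ∩ ·) {B | MeasurableSet[cylσ E S] B} {C | MeasurableSet[cylσ E Sᶜ] C}) := by
  apply le_antisymm
  · refine iSup_le fun v => ?_
    by_cases hv : v ∈ S
    · refine le_trans (measurable_iff_comap_le.1 (coord_meas hv)) ?_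
      intro B hB
      refine MeasurableSpace.measurableSet_generateFrom ⟨B, hB, Set.univ, ?_, by simp⟩
      exact @MeasurableSet.univ _ (cylσ E Sᶜ)
    · refine le_trans (measurable_iff_comap_le.1 (coord_meas (S := Sᶜ) hv)) ?_
      intro B hB
      refine MeasurableSpace.measurableSet_generateFrom ⟨Set.univ, ?_, B, hB, by simp⟩
      exact @MeasurableSet.univ _ (cylσ E S)
  · refine MeasurableSpace.generateFrom_le ?_
    rintro _ ⟨B, hB, C, hC, rfl⟩
    exact (cyl_le S B hB).inter (cyl_le _ C hC)

theorem cyl_pi (S : Set (Site d)) : IsPiSystem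
      (Set.image2 (· ∩ ·) {B : Set (Conf E d) | MeasurableSet[cylσ E S] B}
        {C | MeasurableSet[cylσ E Sᶜ] C}) := by
  rintro _ ⟨B, hB, C, hC, rfl⟩ _ ⟨B', hB', C', hC', rfl⟩ _
  refine ⟨B ∩ B', @MeasurableSet.inter _ (cylσ E S) _ _ hB hB', C ∩ C',
    @MeasurableSet.inter _ (cylσ E Sᶜ) _ _ hC hC', ?_⟩
  exact Set.inter_inter_inter_comm _ _ _ _

theorem bdry_sub (V : Finset (Site d)) : bdry V ⊆ (↑V : Set (Site d))ᶜ := fun _ h => h.1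

section
variable {γ : Finset (Site d) → Conf E d → Measure (Conf E d)}

theorem ae_const (hγ : IsSpecification γ) (V : Finset (Site d)) {h : Conf E d → ENNReal}
    (hh : Measurable[cylσ E ((↑V : Set (Site d))ᶜ)] h) (x : Conf E d) :
    ∀ᵐ z ∂(γ V x), h z = h x := by
  rw [ae_iff]
  have hm : MeasurableSet[cylσ E ((↑V : Set (Site d))ᶜ)] {z | ¬ h z = h x} :=
    hh (measurableSet_singleton (h x)).compl
  rw [hγ.proper V _ hm]
  simp

theorem lint_proper (hγ : IsSpecification γ) (V : Finset (Site d)) {h u : Conf E d → ENNReal}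
    (hh : Measurable[cylσ E ((↑V : Set (Site d))ᶜ)] h) (hu : Measurable u) (x : Conf E d) :
    ∫⁻ z, h z * u z ∂(γ V x) = h x * ∫⁻ z, u z ∂(γ V x) := by
  rw [← lintegral_const_mul _ hu]
  refine lintegral_congr_ae ?_
  filter_upwards [ae_const hγ V hh x] with z hz
  rw [hz]

theorem compl_meas (hγ : IsSpecification γ) (V : Finset (Site d)) (A : Set (Conf E d)) (hA : MeasurableSet A) :
    Measurable[cylσ E ((↑V : Set (Site d))ᶜ)] fun x => γ V x A := by
  have := hγ.prob
  induction A, hA using MeasurableSpace.induction_on_inter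
    (cyl_gen (↑V : Set (Site d))) (cyl_pi _) with
  | empty => simp
  | basic A hA =>
    obtain ⟨B, hB, C, hC, rfl⟩ := hA
    have h1 : Measurable[cylσ E ((↑V : Set (Site d))ᶜ)]
        (C.indicator (fun _ => (1 : ENNReal))) :=
      Measurable.indicator measurable_const hC
    have h2 : Measurable[cylσ E ((↑V : Set (Site d))ᶜ)] fun x => γ V x B :=
      (hγ.bdryMeas V B hB).mono (cyl_mono (bdry_sub V)) le_rfl
    have hB' := cyl_le _ B hB
    have hC' := cyl_le _ C hC
    have : (fun x => γ V x (B ∩ C)) =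
        fun x => C.indicator (fun _ => (1 : ENNReal)) x * γ V x B := by
      funext x
      have := lint_proper hγ V h1 (u := B.indicator 1) (measurable_one.indicator hB') x
      rw [lintegral_indicator_one hB'] at this
      rw [← this, ← lintegral_indicator_one (hB'.inter hC')]
      congr 1
      funext z
      by_cases hz : z ∈ B <;> by_cases hz' : z ∈ C <;> simp [hz, hz']
    change Measurable[cylσ E ((↑V : Set (Site d))ᶜ)] fun x => γ V x (B ∩ C)
    rw [this]
    exact Measurable.mul h1 h2
  | compl A hA ih =>
    have : (fun x => γ V x Aᶜ) = fun x => 1 - γ V x A := by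
      funext x
      exact prob_compl_eq_one_sub hA
    rw [this]
    exact Measurable.const_sub ih 1
  | iUnion f hd hf ih =>
    have : (fun x => γ V x (⋃ i, f i)) = fun x => ∑' i, γ V x (f i) := by
      funext x
      exact measure_iUnion hd hf
    rw [this]
    exact Measurable.ennreal_tsum ih

theorem lint_compl_meas (hγ : IsSpecification γ) (V : Finset (Site d)) {f : Conf E d → ENNReal} (hf : Measurable f) :
    Measurable[cylσ E ((↑V : Set (Site d))ᶜ)] fun x => ∫⁻ z, f z ∂(γ V x) := by
  have h : Measurable[cylσ E ((↑V : Set (Site d))ᶜ)] (γ V) :=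
    @Measure.measurable_of_measurable_coe _ _ _ (cylσ E ((↑V : Set (Site d))ᶜ)) _
      (compl_meas hγ V)
  exact (Measure.measurable_lintegral hf).comp h

theorem lint_bdry_meas (hγ : IsSpecification γ) (V : Finset (Site d)) {f : Conf E d → ENNReal}
    (hf : Measurable[cylσ E (↑V : Set (Site d))] f) :
    Measurable[cylσ E (bdry V)] fun x => ∫⁻ z, f z ∂(γ V x) := by
  have h : @Measurable _ _ (cylσ E (bdry V))
      (@Measure.instMeasurableSpace _ (cylσ E (↑V : Set (Site d))))
      (fun x => (γ V x).trim (cyl_le (↑V : Set (Site d)))) := by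
    refine @Measure.measurable_of_measurable_coe _ _ (cylσ E (↑V : Set (Site d)))
      (cylσ E (bdry V)) _ ?_
    intro A hA
    simp_rw [trim_measurableSet_eq (cyl_le (↑V : Set (Site d))) hA]
    exact hγ.bdryMeas V A hA
  have := (@Measure.measurable_lintegral _ (cylσ E (↑V : Set (Site d))) f hf).comp h
  have e : (fun x => ∫⁻ z, f z ∂(γ V x)) = (fun μ => @lintegral _ (cylσ E (↑V : Set (Site d))) μ f) ∘
      (fun x => (γ V x).trim (cyl_le (↑V : Set (Site d)))) := by
    funext x
    exact (lintegral_trim _ hf).symm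
  rw [e]
  exact this

theorem ker_meas (hγ : IsSpecification γ) (V : Finset (Site d)) : Measurable (γ V) :=
  Measure.measurable_of_measurable_coe _ (hγ.kernel V)

theorem lint_consistent (hγ : IsSpecification γ) {V W : Finset (Site d)} (hW : W ⊆ V) {f : Conf E d → ENNReal}
    (hf : Measurable f) (x : Conf E d) :
    ∫⁻ z, ∫⁻ z', f z' ∂(γ W z) ∂(γ V x) = ∫⁻ z, f z ∂(γ V x) := by
  have hb : (γ V x).bind (γ W) = γ V x := by
    ext A hA
    rw [Measure.bind_apply hA (ker_meas hγ W).aemeasurable]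
    exact hγ.consistent V W hW A hA x
  rw [← Measure.lintegral_bind (ker_meas hγ W).aemeasurable hf.aemeasurable, hb]

end

/-- The unnormalized weight. -/
def wt {F : Type*} (g : Site d → E → F → ℝ) (y : Site d → F) (V : Finset (Site d))
    (z : Conf E d) : ENNReal := ENNReal.ofReal (∏ v ∈ V, g v (z v) (y v))

theorem wt_meas {F : Type*} [MeasurableSpace F] {g : Site d → E → F → ℝ}
    (hgm : ∀ v, Measurable (Function.uncurry (g v))) (y : Site d → F) (V : Finset (Site d))
    {S : Set (Site d)} (hS : (↑V : Set (Site d)) ⊆ S) : Measurable[cylσ E S] (wt g y V) := by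
  refine ENNReal.measurable_ofReal.comp ?_
  refine Finset.measurable_fun_prod V fun v hv => ?_
  have h1 : Measurable (fun e => g v e (y v)) :=
    (hgm v).comp (measurable_id.prodMk measurable_const)
  exact h1.comp (coord_meas (hS hv))

theorem condKer_apply {F : Type*} (γ : Finset (Site d) → Conf E d → Measure (Conf E d))
    (g : Site d → E → F → ℝ) (y : Site d → F) (V : Finset (Site d)) (x : Conf E d)
    {A : Set (Conf E d)} (hA : MeasurableSet A) :
    condKer γ g y V x A =
      (∫⁻ z, wt g y V z ∂(γ V x))⁻¹ * ∫⁻ z, A.indicator (wt g y V) z ∂(γ V x) := by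
  unfold condKer
  simp only [Measure.smul_apply, smul_eq_mul]
  rw [withDensity_apply _ hA, withDensity_apply _ MeasurableSet.univ, Measure.restrict_univ,
    lintegral_indicator hA]
  rfl

/-- **Proposition 5.5(1).**  If `γ` is a specification and the local observation densities
`g_v` are measurable and strictly positive, then for every observation configuration
`y ∈ F^{ℤ^d}` the conditional family `γ^y` is again a specification. -/
theorem statement13 [Fintype E] {F : Type*} [MeasurableSpace F] [StandardBorelSpace F]
    (γ : Finset (Site d) → Conf E d → Measure (Conf E d)) (hγ : IsSpecification γ)
    (g : Site d → E → F → ℝ) (hgm : ∀ v, Measurable (Function.uncurry (g v)))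
    (hgpos : ∀ v e y, 0 < g v e y) :
    ∀ y : Site d → F, IsSpecification fun V x => condKer γ g y V x := by
  intro y
  have hprob := hγ.prob
  have hfm : ∀ V, Measurable (wt g y V) := fun V =>
    (wt_meas hgm y V (Set.subset_univ _)).mono (cyl_le _) le_rfl
  have hpos : ∀ V z, wt g y V z ≠ 0 := fun V z => by
    unfold wt
    rw [ne_eq, ENNReal.ofReal_eq_zero, not_le]
    exact Finset.prod_pos fun v _ => hgpos v _ _
  have hZ0 : ∀ V x, ∫⁻ z, wt g y V z ∂(γ V x) ≠ 0 := fun V x h => by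
    rw [lintegral_eq_zero_iff (hfm V)] at h
    obtain ⟨z, hz⟩ := h.exists
    exact hpos V z hz
  have hZt : ∀ V x, ∫⁻ z, wt g y V z ∂(γ V x) ≠ ⊤ := fun V x => by
    have hb : ∀ z, wt g y V z ≤ ENNReal.ofReal (∏ v ∈ V, ∑ e, g v e (y v)) := fun z => by
      refine ENNReal.ofReal_le_ofReal (Finset.prod_le_prod (fun v _ => (hgpos _ _ _).le)
        fun v _ => ?_)
      exact Finset.single_le_sum (f := fun e => g v e (y v))
        (fun e _ => (hgpos _ _ _).le) (Finset.mem_univ (z v))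
    refine ne_top_of_le_ne_top ?_ (lintegral_mono hb)
    simp
  have hmA : ∀ (V : Finset (Site d)) (A : Set (Conf E d)), MeasurableSet A →
      Measurable[cylσ E ((↑V : Set (Site d))ᶜ)] fun x => condKer γ g y V x A := by
    intro V A hA
    simp_rw [condKer_apply γ g y V _ hA]
    exact Measurable.mul (Measurable.inv (lint_compl_meas hγ V (hfm V)))
      (lint_compl_meas hγ V ((hfm V).indicator hA))
  refine ⟨?_, ?_, ?_, ?_, ?_⟩
  · intro V x
    refine ⟨?_⟩
    rw [condKer_apply γ g y V x MeasurableSet.univ, Set.indicator_univ]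
    exact ENNReal.inv_mul_cancel (hZ0 V x) (hZt V x)
  · intro V A hA
    exact (hmA V A hA).mono (cyl_le _) le_rfl
  · intro V A hA
    have hA' := cyl_le _ A hA
    simp_rw [condKer_apply γ g y V _ hA']
    have hw := wt_meas hgm y V (subset_refl (↑V : Set (Site d)))
    exact Measurable.mul (Measurable.inv (lint_bdry_meas hγ V hw))
      (lint_bdry_meas hγ V (Measurable.indicator hw hA))
  · intro V A hA x
    have hA' := cyl_le _ A hA
    simp only [condKer_apply γ g y V _ hA']
    have h1 : Measurable[cylσ E ((↑V : Set (Site d))ᶜ)]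
        (A.indicator (fun _ => (1 : ENNReal))) :=
      Measurable.indicator measurable_const hA
    have h2 := lint_proper hγ V h1 (hfm V) x
    have h3 : ∀ z, A.indicator (wt g y V) z =
        A.indicator (fun _ => (1 : ENNReal)) z * wt g y V z := fun z => by
      by_cases hz : z ∈ A <;> simp [hz]
    simp_rw [h3]
    rw [h2, mul_left_comm, ENNReal.inv_mul_cancel (hZ0 V x) (hZt V x), mul_one]
  · intro V W hWV A hA x
    have hφ := hmA W A hA
    have hh : Measurable[cylσ E ((↑W : Set (Site d))ᶜ)] (wt g y (V \ W)) :=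
      wt_meas hgm y (V \ W) (by intro v hv; simp at hv ⊢; exact hv.2)
    have hsplit : ∀ z, wt g y V z = wt g y (V \ W) z * wt g y W z := fun z => by
      unfold wt
      rw [← ENNReal.ofReal_mul (Finset.prod_nonneg fun v _ => (hgpos _ _ _).le),
        Finset.prod_sdiff hWV]
    have hφ' : Measurable fun z => condKer γ g y W z A := hφ.mono (cyl_le _) le_rfl
    have key : ∫⁻ z, wt g y V z * condKer γ g y W z A ∂(γ V x) =
        ∫⁻ z, A.indicator (wt g y V) z ∂(γ V x) := by
      rw [← lint_consistent hγ hWV (f := fun z => wt g y V z * condKer γ g y W z A)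
          ((hfm V).mul hφ'),
        ← lint_consistent hγ hWV ((hfm V).indicator hA)]
      refine lintegral_congr fun z => ?_
      have e1 : ∀ z', wt g y V z' * condKer γ g y W z' A =
          (wt g y (V \ W) z' * condKer γ g y W z' A) * wt g y W z' := fun z' => by
        rw [hsplit]; ring
      have e2 : ∀ z', A.indicator (wt g y V) z' =
          wt g y (V \ W) z' * A.indicator (wt g y W) z' := fun z' => by
        by_cases hz : z' ∈ A <;> simp [hz, hsplit]
      simp only [e1, e2]
      rw [lint_proper hγ W (h := fun z' => wt g y (V \ W) z' * condKer γ g y W z' A)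
          (Measurable.mul hh hφ) (hfm W) z,
        lint_proper hγ W hh ((hfm W).indicator hA) z, condKer_apply γ g y W z hA, mul_assoc,
        mul_right_comm _ _ (∫⁻ z, wt g y W z ∂(γ W z)),
        ENNReal.inv_mul_cancel (hZ0 W z) (hZt W z), one_mul]
    rw [condKer_apply γ g y V x hA, ← key]
    have : condKer γ g y V x =
        (∫⁻ z, wt g y V z ∂(γ V x))⁻¹ • (γ V x).withDensity (wt g y V) := by
      unfold condKer
      simp only
      rw [withDensity_apply _ MeasurableSet.univ, Measure.restrict_univ]
      rfl
    simp only [this]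
    rw [lintegral_smul_measure, lintegral_withDensity_eq_lintegral_mul _ (hfm V) hφ']
    rfl

end RandomField
end
end
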